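/- Let F : ℝ⁴ → ℝ⁴ be the map (x¹,x²,y¹,y²) ↦ (u₃¹, u₃², u₄¹, u₄²) with u₃¹ = x¹ + y¹ + (1/2)(x¹)²y², u₃² = x² + y² − (1/2)x¹(y²)², u₄¹ = −x¹ + y¹ + (1/2)(x¹)²y², u₄² = x² − y² − (1/2)x¹(y²)². Then the determinant of the Jacobian matrix (total Fréchet derivative) of F is identically equal to −4 on all of ℝ⁴; in particular the differentials du₃¹, du₃², du₄¹, du₄² are everywhere linearly independent, so the level foliations of u₃ = (u₃¹,u₃²) and u₄ = (u₄¹,u₄²) are everywhere transversal. -/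

import Mathlib

noncomputable section

/- Coordinates on ℝ⁴ = (Fin 4 → ℝ) are indexed as
   0 ↦ x¹, 1 ↦ x², 2 ↦ y¹, 3 ↦ y². -/

/-- `u₃¹ = x¹ + y¹ + (1/2)(x¹)²y²`. -/
def u31 : (Fin 4 → ℝ) → ℝ := fun p => p 0 + p 2 + (1/2) * (p 0)^2 * p 3

/-- `u₃² = x² + y² − (1/2)x¹(y²)²`. -/
def u32 : (Fin 4 → ℝ) → ℝ := fun p => p 1 + p 3 - (1/2) * p 0 * (p 3)^2

/-- `u₄¹ = −x¹ + y¹ + (1/2)(x¹)²y²`. -/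
def u41 : (Fin 4 → ℝ) → ℝ := fun p => -p 0 + p 2 + (1/2) * (p 0)^2 * p 3

/-- `u₄² = x² − y² − (1/2)x¹(y²)²`. -/
def u42 : (Fin 4 → ℝ) → ℝ := fun p => p 1 - p 3 - (1/2) * p 0 * (p 3)^2

/-- The Jacobian matrix of `F = (u₃¹, u₃², u₄¹, u₄²)` at a point:
entry `(i, j)` is the partial derivative of the `i`-th component in the
`j`-th coordinate direction. -/
def jacobianF (pt : Fin 4 → ℝ) : Matrix (Fin 4) (Fin 4) ℝ :=
  Matrix.of fun i j => fderiv ℝ (![u31, u32, u41, u42] i) pt (Pi.single j 1)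

theorem fderiv_u31 (p v : Fin 4 → ℝ) : fderiv ℝ u31 p v =
    v 0 + v 2 + p 0 * p 3 * v 0 + (1/2) * (p 0)^2 * v 3 := by
  have h (i : Fin 4) : HasFDerivAt (fun q : Fin 4 → ℝ => q i)
      (ContinuousLinearMap.proj (R := ℝ) (φ := fun _ : Fin 4 => ℝ) i) p := hasFDerivAt_apply i p
  have := ((h 0).add (h 2)).add ((((h 0).pow 2).const_mul (1/2)).mul (h 3))
  rw [HasFDerivAt.fderiv (f := u31) this]
  simp
  ring

theorem fderiv_u32 (p v : Fin 4 → ℝ) : fderiv ℝ u32 p v =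
    v 1 + v 3 - (1/2) * (p 3)^2 * v 0 - p 0 * p 3 * v 3 := by
  have h (i : Fin 4) : HasFDerivAt (fun q : Fin 4 → ℝ => q i)
      (ContinuousLinearMap.proj (R := ℝ) (φ := fun _ : Fin 4 => ℝ) i) p := hasFDerivAt_apply i p
  have := ((h 1).add (h 3)).sub (((h 0).const_mul (1/2)).mul ((h 3).pow 2))
  rw [HasFDerivAt.fderiv (f := u32) this]
  simp
  ring

theorem fderiv_u41 (p v : Fin 4 → ℝ) : fderiv ℝ u41 p v =
    -v 0 + v 2 + p 0 * p 3 * v 0 + (1/2) * (p 0)^2 * v 3 := by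
  have h (i : Fin 4) : HasFDerivAt (fun q : Fin 4 → ℝ => q i)
      (ContinuousLinearMap.proj (R := ℝ) (φ := fun _ : Fin 4 => ℝ) i) p := hasFDerivAt_apply i p
  have := ((h 0).neg.add (h 2)).add ((((h 0).pow 2).const_mul (1/2)).mul (h 3))
  rw [HasFDerivAt.fderiv (f := u41) this]
  simp
  ring

theorem fderiv_u42 (p v : Fin 4 → ℝ) : fderiv ℝ u42 p v =
    v 1 - v 3 - (1/2) * (p 3)^2 * v 0 - p 0 * p 3 * v 3 := by
  have h (i : Fin 4) : HasFDerivAt (fun q : Fin 4 → ℝ => q i)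
      (ContinuousLinearMap.proj (R := ℝ) (φ := fun _ : Fin 4 => ℝ) i) p := hasFDerivAt_apply i p
  have := ((h 1).sub (h 3)).sub (((h 0).const_mul (1/2)).mul ((h 3).pow 2))
  rw [HasFDerivAt.fderiv (f := u42) this]
  simp
  ring

/-- The Jacobian determinant of `F = (u₃¹, u₃², u₄¹, u₄²)` is identically `−4`
on all of ℝ⁴; in particular the differentials `du₃¹, du₃², du₄¹, du₄²` are
everywhere linearly independent. -/
theorem jacobian_det_eq_neg_four (pt : Fin 4 → ℝ) :
    (jacobianF pt).det = -4 ∧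
    LinearIndependent ℝ
      ![fderiv ℝ u31 pt, fderiv ℝ u32 pt, fderiv ℝ u41 pt, fderiv ℝ u42 pt] := by
  constructor
  · simp [jacobianF, Matrix.det_succ_row_zero, Fin.sum_univ_succ, Fin.succAbove,
      fderiv_u31, fderiv_u32, fderiv_u41, fderiv_u42, Pi.single_apply]
    ring
  · rw [Fintype.linearIndependent_iff]
    intro g hg
    have e (j : Fin 4) := DFunLike.congr_fun hg (Pi.single j 1)
    have e0 := e 0
    have e1 := e 1
    have e2 := e 2
    have e3 := e 3
    simp [Fin.sum_univ_four, fderiv_u31, fderiv_u32, fderiv_u41, fderiv_u42,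
      Pi.single_apply] at e0 e1 e2 e3
    have a2 : g 2 = -g 0 := by linarith
    have a3 : g 3 = -g 1 := by linarith
    rw [a2, a3] at e0 e3
    have b0 : g 0 = 0 := by linarith
    have b1 : g 1 = 0 := by linarith
    intro i
    fin_cases i <;> simp [a2, a3, b0, b1]

end
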